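/- arXiv:2304.01722 — 4 statements merged into one kernel-verified Lean document; each statement's English description precedes it below -/
import Mathlib

section
/- Let V be a real Hilbert space, U a real normed space, B : U → V* a continuous linear map into the continuous dual of V, Uⁿ ⊆ U a linear subspace, and ℓ ∈ V*. Then an element u₀ ∈ Uⁿ satisfies ‖ℓ − B u₀‖_{V*} ≤ ‖ℓ − B w‖_{V*} for all w ∈ Uⁿ (i.e., u₀ minimizes the residual dual norm over Uⁿ) if and only if there exists r ∈ V such that ⟨r, v⟩ = ℓ(v) − (B u₀)(v) for all v ∈ V, and (B w)(r) = 0 for all w ∈ Uⁿ. (The element r is then the Riesz representative of the residual ℓ − B u₀.) -/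
open RealInnerProductSpace

/-!
The Riesz isometry turns the dual-norm minimization into a best-approximation problem in `V`, for
the subspace of Riesz representatives of `B w`, `w ∈ Uⁿ`. Best approximation means that the
representative `r` of the residual is orthogonal to this subspace, and pairing `r` with the
representative of `B w` is, up to conjugation, evaluating `B w` at `r`.
-/

section

open InnerProductSpace

variable {𝕜 V : Type*} [RCLike 𝕜] [NormedAddCommGroup V] [InnerProductSpace 𝕜 V]

theorem forall_norm_sub_le_iff_inner_eq_zero (K : Submodule 𝕜 V) {u v : V} (hv : v ∈ K) :
    (∀ w ∈ K, ‖u - v‖ ≤ ‖u - w‖) ↔ ∀ w ∈ K, inner 𝕜 (u - v) w = 0 := by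
  have hbdd : BddBelow (Set.range fun w : K ↦ ‖u - w‖) :=
    ⟨0, Set.forall_mem_range.mpr fun _ ↦ norm_nonneg _⟩
  rw [← K.norm_eq_iInf_iff_inner_eq_zero hv]
  constructor
  · intro hmin
    exact le_antisymm (le_ciInf fun w ↦ hmin w w.2) (ciInf_le hbdd ⟨v, hv⟩)
  · intro hinf w hw
    exact hinf.trans_le (ciInf_le hbdd ⟨w, hw⟩)

theorem forall_norm_sub_map_le_iff_inner_map_eq_zero {R U : Type*} [Semiring R] [AddCommMonoid U]
    [Module R U] {σ : R →+* 𝕜} [RingHomSurjective σ] (T : U →ₛₗ[σ] V) (p : Submodule R U)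
    {x : V} {u₀ : U} (hu₀ : u₀ ∈ p) :
    (∀ w ∈ p, ‖x - T u₀‖ ≤ ‖x - T w‖) ↔ ∀ w ∈ p, inner 𝕜 (x - T u₀) (T w) = 0 := by
  simpa only [Submodule.mem_map, forall_exists_index, and_imp, forall_apply_eq_imp_iff₂] using
    forall_norm_sub_le_iff_inner_eq_zero (p.map T) (u := x) (Submodule.mem_map_of_mem hu₀)

variable [CompleteSpace V]

theorem forall_inner_eq_iff_eq_toDual_symm {f : StrongDual 𝕜 V} {r : V} :
    (∀ v, inner 𝕜 r v = f v) ↔ r = (toDual 𝕜 V).symm f := by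
  simp_rw [← toDual_symm_apply (y := f)]
  exact (ext_iff_inner_right 𝕜).symm

theorem inner_toDual_symm_eq_zero_iff {f : StrongDual 𝕜 V} {v : V} :
    inner 𝕜 v ((toDual 𝕜 V).symm f) = 0 ↔ f v = 0 := by
  rw [inner_eq_zero_symm, toDual_symm_apply]

theorem minres_iff_mixed_formulation_general {U : Type*} [AddCommMonoid U] [Module 𝕜 U]
    (B : U →ₗ[𝕜] StrongDual 𝕜 V) (Un : Submodule 𝕜 U) (ℓ : StrongDual 𝕜 V)
    {u₀ : U} (hu₀ : u₀ ∈ Un) :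
    (∀ w ∈ Un, ‖ℓ - B u₀‖ ≤ ‖ℓ - B w‖) ↔
      ∃ r : V, (∀ v : V, inner 𝕜 r v = ℓ v - B u₀ v) ∧ ∀ w ∈ Un, B w r = 0 := by
  let riesz := (toDual 𝕜 V).symm
  let T : U →ₛₗ[starRingEnd 𝕜] V := riesz.toLinearEquiv.toLinearMap.comp B
  have hT (w : U) : T w = riesz (B w) := rfl
  calc (∀ w ∈ Un, ‖ℓ - B u₀‖ ≤ ‖ℓ - B w‖)
    _ ↔ ∀ w ∈ Un, ‖riesz ℓ - T u₀‖ ≤ ‖riesz ℓ - T w‖ := by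
      simp only [hT, ← map_sub, LinearIsometryEquiv.norm_map]
    _ ↔ ∀ w ∈ Un, inner 𝕜 (riesz ℓ - T u₀) (T w) = 0 :=
      forall_norm_sub_map_le_iff_inner_map_eq_zero T Un hu₀
    _ ↔ ∀ w ∈ Un, B w (riesz (ℓ - B u₀)) = 0 := by
      simp only [hT, ← map_sub, riesz, inner_toDual_symm_eq_zero_iff]
    _ ↔ ∃ r : V, (∀ v : V, inner 𝕜 r v = ℓ v - B u₀ v) ∧ ∀ w ∈ Un, B w r = 0 := by
      simp only [← sub_apply, forall_inner_eq_iff_eq_toDual_symm, exists_eq_left, riesz]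

end

/-- Characterization of minimal-residual approximations: `u₀ ∈ Uⁿ` minimizes the
residual dual norm `‖ℓ - B w‖` over `Uⁿ` iff there is `r ∈ V` (the Riesz
representative of the residual) with `⟪r, v⟫ = ℓ v - (B u₀) v` for all `v` and
`(B w) r = 0` for all `w ∈ Uⁿ`. -/
theorem minres_iff_mixed_formulation
    {V : Type*} [NormedAddCommGroup V] [InnerProductSpace ℝ V] [CompleteSpace V]
    {U : Type*} [NormedAddCommGroup U] [NormedSpace ℝ U]
    (B : U →L[ℝ] (V →L[ℝ] ℝ)) (Un : Submodule ℝ U) (ℓ : V →L[ℝ] ℝ)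
    (u₀ : U) (hu₀ : u₀ ∈ Un) :
    (∀ w ∈ Un, ‖ℓ - B u₀‖ ≤ ‖ℓ - B w‖) ↔
      ∃ r : V, (∀ v : V, ⟪r, v⟫ = ℓ v - (B u₀) v) ∧ ∀ w ∈ Un, (B w) r = 0 :=
  minres_iff_mixed_formulation_general B.toLinearMap Un ℓ hu₀
end

section
/- Let V be a real Hilbert space with inner product ⟨·,·⟩, U a real normed space, B : U → V* continuous linear, Uⁿ ⊆ U a subspace, and ℓ ∈ V*. Let a : V × V → ℝ be a symmetric bilinear form with C₁⟨v, v⟩ ≤ a(v, v) ≤ C₂⟨v, v⟩ for all v ∈ V, where 0 < C₁ ≤ C₂, and let ‖f‖_{V*(a)} := sup{ f(v)/√(a(v,v)) : v ≠ 0 } denote the associated weighted dual norm. If u_a ∈ Uⁿ minimizes w ↦ ‖ℓ − B w‖_{V*(a)} over Uⁿ, then ‖ℓ − B u_a‖_{V*} ≤ √(C₂/C₁) · ‖ℓ − B w‖_{V*} for every w ∈ Uⁿ; that is, the minimizer with respect to any equivalent weighted inner product is quasi-optimal in the original dual norm with constant √(C₂/C₁). -/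
open RealInnerProductSpace

/-! If `c * ‖v‖ ≤ q v ≤ C * ‖v‖` for all `v`, then the dual norm `N` with weight `q` satisfies
`c * N f ≤ ‖f‖ ≤ C * N f`. Passing from the norm of the minimizer's residual to its weighted norm,
comparing there, and passing back costs the factor `C / c`. The weight `v ↦ √(a v v)` has `c = √C₁`
and `C = √C₂`. -/

section WeightedDualNorm

variable {V : Type*} [NormedAddCommGroup V] {q : V → ℝ} {c C : ℝ}

theorem pos_of_mul_norm_le (hc : 0 < c) {v : V} (hv : v ≠ 0) {x : ℝ} (hx : c * ‖v‖ ≤ x) : 0 < x :=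
  (mul_pos hc (norm_pos_iff.2 hv)).trans_le hx

variable [NormedSpace ℝ V]

/-- The norm on the dual of `V` obtained by measuring vectors with the weight `q` instead of the
norm. The weight need not be a norm; the supremum is the junk value `0` if it is unbounded. -/
noncomputable def weightedDualNorm (q : V → ℝ) (f : StrongDual ℝ V) : ℝ :=
  ⨆ v : {v : V // v ≠ 0}, f v / q v

theorem apply_div_le_norm_div (hc : 0 < c) (f : StrongDual ℝ V) {v : V} (hv : v ≠ 0)
    {x : ℝ} (hx : c * ‖v‖ ≤ x) : f v / x ≤ ‖f‖ / c := by
  rw [div_le_div_iff₀ (pos_of_mul_norm_le hc hv hx) hc]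
  calc f v * c ≤ ‖f‖ * ‖v‖ * c := by
        gcongr
        exact (le_abs_self _).trans (f.le_opNorm v)
    _ = ‖f‖ * (c * ‖v‖) := by ring
    _ ≤ ‖f‖ * x := by gcongr

theorem weightedDualNorm_le_norm_div (hc : 0 < c) (hq : ∀ v, c * ‖v‖ ≤ q v)
    (f : StrongDual ℝ V) : weightedDualNorm q f ≤ ‖f‖ / c :=
  Real.iSup_le (fun v ↦ apply_div_le_norm_div hc f v.2 (hq v)) (by positivity)

theorem weightedDualNorm_nonneg (hq : ∀ v, 0 ≤ q v) (f : StrongDual ℝ V) :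
    0 ≤ weightedDualNorm q f := by
  rcases isEmpty_or_nonempty {v : V // v ≠ 0} with _ | ⟨⟨v, hv⟩⟩
  · exact (Real.iSup_of_isEmpty _).ge
  · apply Real.iSup_nonneg'
    rcases le_total 0 (f v) with hfv | hfv
    · exact ⟨⟨v, hv⟩, div_nonneg hfv (hq v)⟩
    · exact ⟨⟨-v, neg_ne_zero.2 hv⟩, div_nonneg (by simpa using hfv) (hq (-v))⟩

theorem apply_le_weightedDualNorm_mul (hc : 0 < c) (hq : ∀ v, c * ‖v‖ ≤ q v)
    (f : StrongDual ℝ V) {v : V} (hv : v ≠ 0) : f v ≤ weightedDualNorm q f * q v := by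
  have hbdd : BddAbove (Set.range fun v : {v : V // v ≠ 0} ↦ f v / q v) :=
    ⟨‖f‖ / c, Set.forall_mem_range.2 fun v ↦ apply_div_le_norm_div hc f v.2 (hq v)⟩
  exact (div_le_iff₀ (pos_of_mul_norm_le hc hv (hq v))).1 (le_ciSup hbdd ⟨v, hv⟩)

theorem norm_le_mul_weightedDualNorm (hc : 0 < c) (hC : 0 ≤ C) (hlow : ∀ v, c * ‖v‖ ≤ q v)
    (hhigh : ∀ v, q v ≤ C * ‖v‖) (f : StrongDual ℝ V) : ‖f‖ ≤ C * weightedDualNorm q f := by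
  have hN : 0 ≤ weightedDualNorm q f :=
    weightedDualNorm_nonneg (fun v ↦ le_trans (by positivity) (hlow v)) f
  have apply_le (v : V) : f v ≤ C * weightedDualNorm q f * ‖v‖ := by
    rcases eq_or_ne v 0 with rfl | hv
    · simp
    calc f v ≤ weightedDualNorm q f * q v := apply_le_weightedDualNorm_mul hc hlow f hv
      _ ≤ weightedDualNorm q f * (C * ‖v‖) := by gcongr; exact hhigh v
      _ = C * weightedDualNorm q f * ‖v‖ := by ring
  refine f.opNorm_le_bound (by positivity) fun v ↦ abs_le'.2 ⟨apply_le v, ?_⟩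
  simpa only [map_neg, norm_neg] using apply_le (-v)

theorem weighted_minres_quasi_optimal_general {U : Type*} (r : U → StrongDual ℝ V) {S : Set U}
    {u : U} (hc : 0 < c) (hC : 0 ≤ C) (hlow : ∀ v, c * ‖v‖ ≤ q v) (hhigh : ∀ v, q v ≤ C * ‖v‖)
    (hmin : IsMinOn (fun w ↦ weightedDualNorm q (r w)) S u) :
    ∀ w ∈ S, ‖r u‖ ≤ C / c * ‖r w‖ := fun w hw ↦
  calc ‖r u‖ ≤ C * weightedDualNorm q (r u) := norm_le_mul_weightedDualNorm hc hC hlow hhigh _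
    _ ≤ C * weightedDualNorm q (r w) := by gcongr; exact hmin hw
    _ ≤ C * (‖r w‖ / c) := by gcongr; exact weightedDualNorm_le_norm_div hc hlow _
    _ = C / c * ‖r w‖ := by ring

end WeightedDualNorm

theorem sqrt_mul_real_inner_self {V : Type*} [SeminormedAddCommGroup V] [InnerProductSpace ℝ V]
    (c : ℝ) (v : V) : √(c * ⟪v, v⟫) = √c * ‖v‖ := by
  rw [Real.sqrt_mul' c real_inner_self_nonneg, ← norm_eq_sqrt_real_inner]

/-- Quasi-optimality of the weighted minimal-residual minimizer: if `u_a ∈ Uⁿ`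
minimizes the weighted dual norm of the residual (weight `a` equivalent to the
inner product with constants `C₁ ≤ C₂`), then its residual in the original dual
norm is within a factor `√(C₂/C₁)` of any competitor's residual. -/
theorem weighted_minres_quasi_optimal
    {V : Type*} [NormedAddCommGroup V] [InnerProductSpace ℝ V] [CompleteSpace V]
    {U : Type*} [NormedAddCommGroup U] [NormedSpace ℝ U]
    (B : U →L[ℝ] (V →L[ℝ] ℝ)) (Un : Submodule ℝ U) (ℓ : V →L[ℝ] ℝ)
    (a : V →ₗ[ℝ] V →ₗ[ℝ] ℝ) (hsymm : ∀ u v : V, a u v = a v u)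
    (C₁ C₂ : ℝ) (hC₁ : 0 < C₁) (hC₁₂ : C₁ ≤ C₂)
    (hlow : ∀ v : V, C₁ * ⟪v, v⟫ ≤ a v v) (hhigh : ∀ v : V, a v v ≤ C₂ * ⟪v, v⟫)
    (N : (V →L[ℝ] ℝ) → ℝ)
    (hN : ∀ f : V →L[ℝ] ℝ, N f = ⨆ v : {v : V // v ≠ 0}, f v.1 / Real.sqrt (a v.1 v.1))
    (u_a : U) (hu_a : u_a ∈ Un)
    (hmin : ∀ w ∈ Un, N (ℓ - B u_a) ≤ N (ℓ - B w)) :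
    ∀ w ∈ Un, ‖ℓ - B u_a‖ ≤ Real.sqrt (C₂ / C₁) * ‖ℓ - B w‖ := by
  obtain rfl : N = weightedDualNorm fun v ↦ √(a v v) := funext hN
  rw [Real.sqrt_div' C₂ hC₁.le]
  exact weighted_minres_quasi_optimal_general (fun w ↦ ℓ - B w) (Real.sqrt_pos.2 hC₁)
    (Real.sqrt_nonneg C₂)
    (fun v ↦ (sqrt_mul_real_inner_self C₁ v).symm.trans_le (Real.sqrt_le_sqrt (hlow v)))
    (fun v ↦ (Real.sqrt_le_sqrt (hhigh v)).trans_eq (sqrt_mul_real_inner_self C₂ v)) hmin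
end

section
/- Let V be a real Hilbert space, V^m ⊆ V a finite-dimensional subspace, U a real normed space, B : U → V* continuous linear, Uⁿ ⊆ U a subspace, and ℓ ∈ V*. For each w ∈ Uⁿ, let r(w) ∈ V^m be the unique element with ⟨r(w), v⟩ = ℓ(v) − (B w)(v) for all v ∈ V^m. Then: (i) for every w ∈ Uⁿ, sup{ (ℓ(v) − (B w)(v))/‖v‖ : v ∈ V^m, v ≠ 0 } = ‖r(w)‖; and (ii) an element u₀ ∈ Uⁿ minimizes this discrete dual seminorm w ↦ sup{ (ℓ(v) − (B w)(v))/‖v‖ : v ∈ V^m, v ≠ 0 } over Uⁿ if and only if (B w)(r(u₀)) = 0 for all w ∈ Uⁿ. -/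
open RealInnerProductSpace

/-!
Riesz representation is linear, so `r w = r 0 - T w` for `w ∈ Uⁿ`, where the linear map `T` sends
`w` to the `V^m`-Riesz representative of `B w`. Since the discrete dual seminorm is the norm of the
representative, minimizing it is the least-squares problem `min ‖r 0 - T w‖`, whose normal equations
`⟪r u₀, T w⟫ = 0` read `(B w) (r u₀) = 0`.
-/

section RieszRepresentative

variable {V : Type*} [NormedAddCommGroup V] [InnerProductSpace ℝ V]

/-- The dual seminorm of a functional relative to the subspace `W`, as a supremum of real numbers
over the nonzero vectors of `W`. It is meaningful when `f` is bounded on `W`; otherwise the supremum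
takes the junk value `0`. -/
noncomputable def dualSeminorm (W : Submodule ℝ V) (f : Module.Dual ℝ V) : ℝ :=
  ⨆ v : {v : V // v ∈ W ∧ v ≠ 0}, f v.1 / ‖v.1‖

/-- `r` is the `W`-Riesz representative of `f`. A predicate rather than a function of `f`, since
a representative need not exist when `W` is not complete. -/
def IsRieszRep (W : Submodule ℝ V) (f : Module.Dual ℝ V) (r : V) : Prop :=
  r ∈ W ∧ ∀ v ∈ W, ⟪r, v⟫ = f v

namespace IsRieszRep

variable {W : Submodule ℝ V} {f g : Module.Dual ℝ V} {x y : V}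

lemma unique (hx : IsRieszRep W f x) (hy : IsRieszRep W f y) : x = y := by
  have hmem : x - y ∈ W := W.sub_mem hx.1 hy.1
  rw [← sub_eq_zero, ← inner_self_eq_zero (𝕜 := ℝ)]
  calc ⟪x - y, x - y⟫ = ⟪x, x - y⟫ - ⟪y, x - y⟫ := inner_sub_left x y (x - y)
    _ = 0 := by rw [hx.2 _ hmem, hy.2 _ hmem, sub_self]

lemma add (hx : IsRieszRep W f x) (hy : IsRieszRep W g y) : IsRieszRep W (f + g) (x + y) :=
  ⟨W.add_mem hx.1 hy.1, fun v hv => by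
    rw [inner_add_left, hx.2 v hv, hy.2 v hv, LinearMap.add_apply]⟩

lemma smul (c : ℝ) (hx : IsRieszRep W f x) : IsRieszRep W (c • f) (c • x) :=
  ⟨W.smul_mem c hx.1, fun v hv => by
    rw [real_inner_smul_left, hx.2 v hv, LinearMap.smul_apply, smul_eq_mul]⟩

lemma sub (hx : IsRieszRep W f x) (hy : IsRieszRep W g y) : IsRieszRep W (f - g) (x - y) :=
  ⟨W.sub_mem hx.1 hy.1, fun v hv => by
    rw [inner_sub_left, hx.2 v hv, hy.2 v hv, LinearMap.sub_apply]⟩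

/-- The linear map formed by the `W`-Riesz representatives `T w` of the functionals `A w`. When `A`
is the operator of a variational problem, it is known as the trial-to-test operator. -/
def linearMap {E : Type*} [AddCommGroup E] [Module ℝ E] {A : E →ₗ[ℝ] Module.Dual ℝ V} {T : E → V}
    (hT : ∀ w, IsRieszRep W (A w) (T w)) : E →ₗ[ℝ] V where
  toFun := T
  map_add' w z := (hT (w + z)).unique <| by
    rw [map_add]
    exact (hT w).add (hT z)
  map_smul' c w := (hT (c • w)).unique <| by
    rw [map_smul]
    exact (hT w).smul c

lemma div_norm_le_norm (hx : IsRieszRep W f x) {v : V} (hv : v ∈ W) : f v / ‖v‖ ≤ ‖x‖ := by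
  rw [← hx.2 v hv]
  exact div_le_of_le_mul₀ (norm_nonneg v) (norm_nonneg x) (real_inner_le_norm x v)

lemma apply_self_div_norm (hx : IsRieszRep W f x) : f x / ‖x‖ = ‖x‖ := by
  rw [← hx.2 x hx.1, real_inner_self_eq_norm_mul_norm, mul_self_div_self]

theorem dualSeminorm_eq_norm (hx : IsRieszRep W f x) : dualSeminorm W f = ‖x‖ := by
  have hle (v : {v : V // v ∈ W ∧ v ≠ 0}) : f v.1 / ‖v.1‖ ≤ ‖x‖ := hx.div_norm_le_norm v.2.1
  refine le_antisymm (Real.iSup_le hle (norm_nonneg x)) ?_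
  rcases eq_or_ne x 0 with rfl | hx₀
  · rw [norm_zero]
    refine Real.iSup_nonneg fun v => ?_
    rw [← hx.2 v.1 v.2.1, inner_zero_left, zero_div]
  · exact le_ciSup_of_le ⟨‖x‖, Set.forall_mem_range.mpr hle⟩ ⟨x, hx.1, hx₀⟩
      hx.apply_self_div_norm.ge

end IsRieszRep

end RieszRepresentative

theorem forall_norm_sub_apply_le_iff_inner_eq_zero {E V : Type*} [AddCommGroup E] [Module ℝ E]
    [NormedAddCommGroup V] [InnerProductSpace ℝ V] (T : E →ₗ[ℝ] V) (y : V) (x : E) :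
    (∀ z, ‖y - T x‖ ≤ ‖y - T z‖) ↔ ∀ z, ⟪y - T x, T z⟫ = 0 := by
  have hbdd : BddBelow (Set.range fun v : LinearMap.range T => ‖y - v‖) :=
    ⟨0, Set.forall_mem_range.mpr fun _ => norm_nonneg _⟩
  have hx : T x ∈ LinearMap.range T := LinearMap.mem_range_self T x
  calc (∀ z, ‖y - T x‖ ≤ ‖y - T z‖)
      ↔ ‖y - T x‖ ≤ ⨅ v : LinearMap.range T, ‖y - v‖ := by simp [le_ciInf_iff hbdd]
    _ ↔ ‖y - T x‖ = ⨅ v : LinearMap.range T, ‖y - v‖ :=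
        ⟨fun h => h.antisymm (ciInf_le hbdd ⟨T x, hx⟩), le_of_eq⟩
    _ ↔ ∀ v ∈ LinearMap.range T, ⟪y - T x, v⟫ = 0 :=
        (LinearMap.range T).norm_eq_iInf_iff_real_inner_eq_zero hx
    _ ↔ ∀ z, ⟪y - T x, T z⟫ = 0 := Set.forall_mem_range

theorem forall_norm_rieszRep_le_iff {U V : Type*} [AddCommGroup U] [Module ℝ U]
    [NormedAddCommGroup V] [InnerProductSpace ℝ V] {W : Submodule ℝ V}
    {B : U →ₗ[ℝ] Module.Dual ℝ V} {ℓ : Module.Dual ℝ V} {r : U → V}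
    (hr : ∀ w, IsRieszRep W (ℓ - B w) (r w)) (u₀ : U) :
    (∀ w, ‖r u₀‖ ≤ ‖r w‖) ↔ ∀ w, B w (r u₀) = 0 := by
  have hT (w : U) : IsRieszRep W (B w) (r 0 - r w) := by
    simpa only [map_zero, sub_zero, sub_sub_cancel] using (hr 0).sub (hr w)
  let T : U →ₗ[ℝ] V := IsRieszRep.linearMap hT
  have hres (w : U) : r 0 - T w = r w := sub_sub_cancel (r 0) (r w)
  have hinner (w : U) : ⟪r u₀, T w⟫ = B w (r u₀) := by
    rw [real_inner_comm]
    exact (hT w).2 _ (hr u₀).1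
  simpa only [hres, hinner] using forall_norm_sub_apply_le_iff_inner_eq_zero T (r 0) u₀

theorem discrete_minres_riesz_and_orthogonality_general {U V : Type*} [AddCommGroup U] [Module ℝ U]
    [NormedAddCommGroup V] [InnerProductSpace ℝ V] (W : Submodule ℝ V)
    (B : U →ₗ[ℝ] Module.Dual ℝ V) (S : Submodule ℝ U) (ℓ : Module.Dual ℝ V) (r : U → V)
    (hr : ∀ w ∈ S, IsRieszRep W (ℓ - B w) (r w)) :
    (∀ w ∈ S, dualSeminorm W (ℓ - B w) = ‖r w‖) ∧
      ∀ u₀ ∈ S, (∀ w ∈ S, dualSeminorm W (ℓ - B u₀) ≤ dualSeminorm W (ℓ - B w)) ↔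
        ∀ w ∈ S, B w (r u₀) = 0 := by
  have hnorm (w : U) (hw : w ∈ S) : dualSeminorm W (ℓ - B w) = ‖r w‖ :=
    (hr w hw).dualSeminorm_eq_norm
  refine ⟨hnorm, fun u₀ hu₀ => ?_⟩
  have hrS (w : S) : IsRieszRep W (ℓ - B.domRestrict S w) (r w) := hr w w.2
  calc (∀ w ∈ S, dualSeminorm W (ℓ - B u₀) ≤ dualSeminorm W (ℓ - B w))
      ↔ ∀ w ∈ S, ‖r u₀‖ ≤ ‖r w‖ := forall₂_congr fun w hw => by rw [hnorm u₀ hu₀, hnorm w hw]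
    _ ↔ ∀ w : S, ‖r u₀‖ ≤ ‖r w‖ := by simp only [SetLike.forall]
    _ ↔ ∀ w : S, B w (r u₀) = 0 := forall_norm_rieszRep_le_iff hrS ⟨u₀, hu₀⟩
    _ ↔ ∀ w ∈ S, B w (r u₀) = 0 := SetLike.forall

/-- Discrete minimal residual: (i) the discrete dual seminorm of the residual of
`w` equals the norm of its `V^m`-Riesz representative `r w`; (ii) `u₀ ∈ Uⁿ`
minimizes the discrete dual seminorm over `Uⁿ` iff `(B w)(r u₀) = 0` for all
`w ∈ Uⁿ`. -/
theorem discrete_minres_riesz_and_orthogonality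
    {V : Type*} [NormedAddCommGroup V] [InnerProductSpace ℝ V] [CompleteSpace V]
    {U : Type*} [NormedAddCommGroup U] [NormedSpace ℝ U]
    (Vm : Submodule ℝ V) (hVm : FiniteDimensional ℝ Vm)
    (B : U →L[ℝ] (V →L[ℝ] ℝ)) (Un : Submodule ℝ U) (ℓ : V →L[ℝ] ℝ)
    (r : U → V)
    (hr : ∀ w ∈ Un, r w ∈ Vm ∧ ∀ v ∈ Vm, ⟪r w, v⟫ = ℓ v - (B w) v) :
    (∀ w ∈ Un,
      (⨆ v : {v : V // v ∈ Vm ∧ v ≠ 0}, (ℓ v.1 - (B w) v.1) / ‖v.1‖) = ‖r w‖) ∧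
    (∀ u₀ ∈ Un,
      ((∀ w ∈ Un,
          (⨆ v : {v : V // v ∈ Vm ∧ v ≠ 0}, (ℓ v.1 - (B u₀) v.1) / ‖v.1‖) ≤
            ⨆ v : {v : V // v ∈ Vm ∧ v ≠ 0}, (ℓ v.1 - (B w) v.1) / ‖v.1‖) ↔
        ∀ w ∈ Un, (B w) (r u₀) = 0)) :=
  discrete_minres_riesz_and_orthogonality_general Vm
    (ContinuousLinearMap.coeLM ℝ ∘ₗ B.toLinearMap) Un ℓ.toLinearMap r hr
end

section
/- Let G be a real symmetric positive definite m × m matrix and let B be a real m × n matrix whose kernel is trivial (B x = 0 implies x = 0). Then the (m+n) × (m+n) block matrix [[G, B], [Bᵀ, 0]] is invertible. -/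
open Matrix

/-! If `(x, y)` lies in the kernel, then `G x + B y = 0` and `Bᴴ x = 0`. Pairing the first equation
with `x` removes the term `⟨x, B y⟩ = ⟨Bᴴ x, y⟩ = 0`, so `⟨x, G x⟩ = 0`; definiteness of `G` on the
kernel of `Bᴴ` forces `x = 0`, and then `B y = 0` forces `y = 0`. -/

section SaddlePoint

variable {R m n : Type*} [Fintype m] [Fintype n]

theorem star_dotProduct_mulVec_eq_star_conjTranspose_mulVec_dotProduct [NonUnitalSemiring R]
    [StarRing R] (B : Matrix m n R) (x : m → R) (y : n → R) :
    star x ⬝ᵥ B *ᵥ y = star (Bᴴ *ᵥ x) ⬝ᵥ y := by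
  rw [star_mulVec, conjTranspose_conjTranspose, dotProduct_mulVec]

theorem eq_zero_of_saddle_point_matrix_mulVec_eq_zero [NonUnitalSemiring R] [StarRing R]
    {G : Matrix m m R} {B : Matrix m n R}
    (hG : ∀ x, Bᴴ *ᵥ x = 0 → star x ⬝ᵥ G *ᵥ x = 0 → x = 0) (hB : ∀ y, B *ᵥ y = 0 → y = 0)
    {v : m ⊕ n → R} (hv : fromBlocks G B Bᴴ 0 *ᵥ v = 0) : v = 0 := by
  obtain ⟨x, y, rfl⟩ : ∃ x y, v = Sum.elim x y := ⟨_, _, (Sum.elim_comp_inl_inr v).symm⟩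
  obtain ⟨hGB, hBx⟩ : G *ᵥ x + B *ᵥ y = 0 ∧ Bᴴ *ᵥ x = 0 := by
    simpa [fromBlocks_mulVec, ← Sum.elim_zero_zero, Sum.elim_eq_iff] using hv
  have hxBy : star x ⬝ᵥ B *ᵥ y = 0 := by
    rw [star_dotProduct_mulVec_eq_star_conjTranspose_mulVec_dotProduct, hBx, star_zero,
      zero_dotProduct]
  have hxGx : star x ⬝ᵥ G *ᵥ x = 0 :=
    calc
      star x ⬝ᵥ G *ᵥ x = star x ⬝ᵥ (G *ᵥ x + B *ᵥ y) := by rw [dotProduct_add, hxBy, add_zero]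
      _ = 0 := by rw [hGB, dotProduct_zero]
  obtain rfl : x = 0 := hG x hBx hxGx
  obtain rfl : y = 0 := hB y (by simpa using hGB)
  exact Sum.elim_zero_zero

theorem saddle_point_matrix_invertible_general [Field R] [StarRing R] [DecidableEq m]
    [DecidableEq n] {G : Matrix m m R} {B : Matrix m n R}
    (hG : ∀ x, Bᴴ *ᵥ x = 0 → star x ⬝ᵥ G *ᵥ x = 0 → x = 0) (hB : ∀ y, B *ᵥ y = 0 → y = 0) :
    IsUnit (fromBlocks G B Bᴴ 0) :=
  mulVec_injective_iff_isUnit.1 <|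
    (injective_iff_map_eq_zero (fromBlocks G B Bᴴ 0).mulVecLin).2 fun _ hv =>
      eq_zero_of_saddle_point_matrix_mulVec_eq_zero hG hB hv

end SaddlePoint

/-- The saddle-point block matrix `[[G, B], [Bᵀ, 0]]` is invertible when `G` is
symmetric positive definite and `B` has trivial kernel. -/
theorem saddle_point_matrix_invertible
    {m n : ℕ} (G : Matrix (Fin m) (Fin m) ℝ) (hG : G.PosDef) (hGsymm : G.IsSymm)
    (B : Matrix (Fin m) (Fin n) ℝ) (hB : ∀ x : Fin n → ℝ, B.mulVec x = 0 → x = 0) :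
    IsUnit (Matrix.fromBlocks G B Bᵀ (0 : Matrix (Fin n) (Fin n) ℝ)) := by
  rw [← conjTranspose_eq_transpose_of_trivial]
  exact saddle_point_matrix_invertible_general
    (fun _ _ hxGx => by_contra fun hx => (hG.dotProduct_mulVec_pos hx).ne' hxGx) hB
end
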